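/- Let n ≥ 0 be a natural number, d a nonzero integer, and m_0, …, m_n integers with m_j ≠ −d for every j. Then ∑_{J ⊆ {0,…,n}} (∏_{j∈J} (−m_j)/(m_j+d)) · (n+1−|J|) = 0 if and only if m_0 + m_1 + … + m_n = −(n+1)d. (This is the vanishing criterion in Lemma 3.7: χ_d(ℂPⁿ, D_{m_0,…,m_n}) vanishes precisely when D_{m_0,…,m_n} is a d-canonical divisor on ℂPⁿ, since K_{ℂPⁿ} has degree −(n+1).) -/

import Mathlib

open Finset

/-!
Write `w j = -m j / (m j + d)`, so that `1 + w j = d / (m j + d)` is nonzero. The factor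
`n + 1 - |J|` counts the indices outside `J`, so the weighted sum equals
`∑ i, ∏ j ≠ i, (1 + w j) = (∏ j, (1 + w j)) * ∑ i, (1 + w i)⁻¹`, where
`(1 + w i)⁻¹ = (m i + d) / d`. The product is nonzero, hence the sum vanishes exactly when
`∑ i, (m i + d) = 0`.
-/

/-- The elementary symmetric identity behind the criterion: both sides equal
`∑ i ∈ s, ∏ j ∈ s \ {i}, (1 + w j)`, with `a i` playing the role of `(1 + w i)⁻¹`. -/
lemma sum_powerset_prod_mul_card_sub {ι : Type*} [DecidableEq ι] (w a : ι → ℚ)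
    (h : ∀ i, (1 + w i) * a i = 1) (s : Finset ι) :
    ∑ J ∈ s.powerset, (∏ j ∈ J, w j) * ((s.card : ℚ) - J.card)
      = (∏ j ∈ s, (1 + w j)) * ∑ i ∈ s, a i := by
  induction s using Finset.induction_on with
  | empty => simp
  | insert x s hx ih =>
    rw [sum_powerset_insert hx, prod_insert hx, sum_insert hx, card_insert_of_notMem hx]
    have h1 : ∑ J ∈ s.powerset, (∏ j ∈ J, w j) * (((s.card + 1 : ℕ) : ℚ) - J.card)
        = (∏ j ∈ s, (1 + w j)) * ∑ i ∈ s, a i + ∏ j ∈ s, (1 + w j) := by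
      rw [← ih, prod_one_add, ← sum_add_distrib]
      refine sum_congr rfl fun J _ => ?_
      push_cast
      ring
    have h2 : ∑ J ∈ s.powerset, (∏ j ∈ insert x J, w j) *
          (((s.card + 1 : ℕ) : ℚ) - (insert x J).card)
        = w x * ((∏ j ∈ s, (1 + w j)) * ∑ i ∈ s, a i) := by
      rw [← ih, mul_sum]
      refine sum_congr rfl fun J hJ => ?_
      have hxJ : x ∉ J := fun hh => hx (mem_powerset.1 hJ hh)
      rw [prod_insert hxJ, card_insert_of_notMem hxJ]
      push_cast
      ring
    rw [h1, h2]
    linear_combination (-∏ j ∈ s, (1 + w j)) * h x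

/-- Vanishing criterion in Lemma 3.7: the weighted Euler characteristic
`χ_d(ℂPⁿ, D_{m_0,…,m_n})` vanishes iff `m_0 + ⋯ + m_n = -(n+1)d`,
i.e. iff the divisor is `d`-canonical. -/
theorem chi_d_projective_space_vanishing_iff (n : ℕ) (d : ℤ) (hd : d ≠ 0)
    (m : Fin (n + 1) → ℤ) (hm : ∀ j, m j ≠ -d) :
    (∑ J ∈ (univ : Finset (Fin (n + 1))).powerset,
        (∏ j ∈ J, (-(m j : ℚ)) / ((m j : ℚ) + (d : ℚ))) * ((n : ℚ) + 1 - J.card) = 0)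
      ↔ (∑ j, m j) = -((n : ℤ) + 1) * d := by
  have hd' : (d : ℚ) ≠ 0 := by exact_mod_cast hd
  have hmd : ∀ j, (m j : ℚ) + d ≠ 0 := fun j hj => hm j (by
    have : m j + d = 0 := by exact_mod_cast hj
    omega)
  have hw : ∀ j, 1 + (-(m j : ℚ)) / ((m j : ℚ) + d) = d / ((m j : ℚ) + d) := fun j => by
    have := hmd j
    field_simp
    ring
  have key := sum_powerset_prod_mul_card_sub
    (fun j => (-(m j : ℚ)) / ((m j : ℚ) + d)) (fun j => ((m j : ℚ) + d) / d)
    (fun j => by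
      have := hmd j
      simp only [hw]
      field_simp) univ
  simp only [card_univ, Fintype.card_fin, Nat.cast_add, Nat.cast_one] at key
  have hP : ∏ j, (1 + (-(m j : ℚ)) / ((m j : ℚ) + d)) ≠ 0 :=
    prod_ne_zero_iff.2 fun j _ => by
      rw [hw]
      exact div_ne_zero hd' (hmd j)
  rw [key, mul_eq_zero, or_iff_right hP, ← sum_div, div_eq_zero_iff, or_iff_left hd',
    sum_add_distrib, ← @Int.cast_inj ℚ]
  simp only [sum_const, card_univ, Fintype.card_fin, nsmul_eq_mul]
  push_cast
  constructor <;> intro h <;> linear_combination h
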